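/- If 2β ≥ γ ≥ 1/2 and the local velocities and impulse satisfy the discrete contact conditions, then any step of the nonsmooth Newmark scheme dissipates the algorithmic energy in the sense that H(q_{k+1},v_{k+1},a_{k+1}) − H(q_k,v_k,a_k) − W_ext − W_damp ≤ 0. -/

import Mathlib

open Matrix

/-!
For a symmetric `A`, with `Δx = x' - x` and `x_θ = (1 - θ)x + θx'`,
`½ x'ᵀAx' - ½ xᵀAx = Δxᵀ A x_θ - (θ - ½) Δxᵀ A Δx`.
The Newmark formulas are equivalent to `Δv = h a_γ + w` and
`Δq = h v_½ + ½h²(2β - γ) Δa`. The identity for `(M, v, ½)` turns `Δv` into kinetic energy, for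
`(M, a, γ)` it turns the `Δa` part of `Δq` into the correction in the algorithmic energy, and for
`(K, q, γ)` it gives the elastic energy. Besides the external and damping work there remain two
numerical dissipation terms and the work `v_½ᵀ M w = U_½ᵀ P` of the impulse, where by
complementarity each active contact contributes `½ (1 - e) U P ≤ 0`.
-/

open AffineMap (lineMap lineMap_apply_module)

section QuadraticForm

variable {R ι : Type*} [Fintype ι]

theorem dotProduct_mulVec_comm_of_isSymm [NonUnitalCommSemiring R] {A : Matrix ι ι R}
    (hA : A.IsSymm) (x y : ι → R) : x ⬝ᵥ A *ᵥ y = y ⬝ᵥ A *ᵥ x := by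
  rw [← dotProduct_transpose_mulVec, hA.eq]

theorem half_dotProduct_mulVec_self_sub [Field R] [NeZero (2 : R)] {A : Matrix ι ι R}
    (hA : A.IsSymm) (θ : R) (x x' : ι → R) :
    1 / 2 * (x' ⬝ᵥ A *ᵥ x') - 1 / 2 * (x ⬝ᵥ A *ᵥ x) =
      (x' - x) ⬝ᵥ A *ᵥ lineMap x x' θ - (θ - 1 / 2) * ((x' - x) ⬝ᵥ A *ᵥ (x' - x)) := by
  have h2 : (2 : R) ≠ 0 := two_ne_zero
  simp only [lineMap_apply_module, mulVec_add, mulVec_sub, mulVec_smul, dotProduct_add,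
    dotProduct_sub, sub_dotProduct, dotProduct_smul, smul_eq_mul]
  rw [dotProduct_mulVec_comm_of_isSymm hA x' x]
  field_simp
  ring

theorem mulVec_lineMap {κ : Type*} [CommRing R] (A : Matrix κ ι R) (x x' : ι → R) (θ : R) :
    A *ᵥ lineMap x x' θ = lineMap (A *ᵥ x) (A *ᵥ x') θ := by
  simp only [lineMap_apply_module, mulVec_add, mulVec_smul]

end QuadraticForm

/-- The kinematic part of a nonsmooth Newmark step of size `h` from `(q, v, a)` to `(q', v', a')`,
where `w` is the velocity jump caused by the contact impulse. -/
structure IsNewmarkUpdate {R V : Type*} [Field R] [AddCommGroup V] [Module R V]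
    (h γ β : R) (q q' v v' a a' w : V) : Prop where
  velocity : v' = v + (h * (1 - γ)) • a + (h * γ) • a' + w
  position : q' = q + h • v + (h ^ 2 * (1 / 2 - β)) • a + (h ^ 2 * β) • a' + (h / 2) • w

namespace IsNewmarkUpdate

variable {R V : Type*} [Field R] [AddCommGroup V] [Module R V]
  {h γ β : R} {q q' v v' a a' w : V}

theorem velocity_sub (step : IsNewmarkUpdate h γ β q q' v v' a a' w) :
    v' - v = h • lineMap a a' γ + w := by
  rw [step.velocity, lineMap_apply_module]
  module

theorem position_sub [NeZero (2 : R)] (step : IsNewmarkUpdate h γ β q q' v v' a a' w) :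
    q' - q = h • lineMap v v' (1 / 2 : R) + (h ^ 2 / 2 * (2 * β - γ)) • (a' - a) := by
  have h2 : (2 : R) ≠ 0 := two_ne_zero
  rw [step.position, step.velocity, lineMap_apply_module]
  match_scalars <;> field_simp <;> ring

end IsNewmarkUpdate

section EnergyBalance

variable {R ι : Type*} [Field R] [Fintype ι]

/-- The algorithmic energy `H(q, v, a) = ½ vᵀMv + ½ qᵀKq + ¼h²(2β - γ) aᵀMa`: the mechanical energy
corrected by a quadratic term in the acceleration. -/
def algorithmicEnergy (h γ β : R) (M K : Matrix ι ι R) (q v a : ι → R) : R :=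
  1 / 2 * (v ⬝ᵥ M *ᵥ v) + 1 / 2 * (q ⬝ᵥ K *ᵥ q) + h ^ 2 / 4 * (2 * β - γ) * (a ⬝ᵥ M *ᵥ a)

variable [NeZero (2 : R)] {h γ β : R} {M K C : Matrix ι ι R}
  {q q' v v' a a' w F F' : ι → R}

theorem IsNewmarkUpdate.half_dotProduct_mulVec_velocity_sub
    (step : IsNewmarkUpdate h γ β q q' v v' a a' w) (hM : M.IsSymm) :
    1 / 2 * (v' ⬝ᵥ M *ᵥ v') - 1 / 2 * (v ⬝ᵥ M *ᵥ v) =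
      (q' - q) ⬝ᵥ M *ᵥ lineMap a a' γ
        - h ^ 2 / 2 * (2 * β - γ) * ((a' - a) ⬝ᵥ M *ᵥ lineMap a a' γ)
        + lineMap v v' (1 / 2 : R) ⬝ᵥ M *ᵥ w := by
  rw [half_dotProduct_mulVec_self_sub hM (1 / 2), sub_self, zero_mul, sub_zero,
    dotProduct_mulVec_comm_of_isSymm hM, step.velocity_sub, step.position_sub]
  simp only [mulVec_add, mulVec_smul, dotProduct_add, add_dotProduct, dotProduct_smul,
    smul_dotProduct, smul_eq_mul]
  ring

theorem IsNewmarkUpdate.algorithmicEnergy_balance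
    (step : IsNewmarkUpdate h γ β q q' v v' a a' w) (hM : M.IsSymm) (hK : K.IsSymm)
    (hF : M *ᵥ a + K *ᵥ q + C *ᵥ v = F) (hF' : M *ᵥ a' + K *ᵥ q' + C *ᵥ v' = F') :
    algorithmicEnergy h γ β M K q' v' a' - algorithmicEnergy h γ β M K q v a
        - (q' - q) ⬝ᵥ lineMap F F' γ - -((q' - q) ⬝ᵥ C *ᵥ lineMap v v' γ) =
      lineMap v v' (1 / 2 : R) ⬝ᵥ M *ᵥ w
        - (γ - 1 / 2) * ((q' - q) ⬝ᵥ K *ᵥ (q' - q))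
        - h ^ 2 / 2 * (2 * β - γ) * (γ - 1 / 2) * ((a' - a) ⬝ᵥ M *ᵥ (a' - a)) := by
  have kinetic := step.half_dotProduct_mulVec_velocity_sub hM
  have elastic := half_dotProduct_mulVec_self_sub hK γ q q'
  have correction := half_dotProduct_mulVec_self_sub hM γ a a'
  have force : lineMap F F' γ =
      M *ᵥ lineMap a a' γ + K *ᵥ lineMap q q' γ + C *ᵥ lineMap v v' γ := by
    rw [← hF, ← hF', mulVec_lineMap, mulVec_lineMap, mulVec_lineMap]
    simp only [lineMap_apply_module]
    module
  have quarter : h ^ 2 / 4 = h ^ 2 / 2 * (1 / 2) := by rw [div_mul_div_comm]; norm_num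
  rw [algorithmicEnergy, algorithmicEnergy, force, dotProduct_add, dotProduct_add, quarter]
  linear_combination kinetic + elastic + h ^ 2 / 2 * (2 * β - γ) * correction

end EnergyBalance

section Dissipation

variable {R ι κ : Type*} [Field R] [LinearOrder R] [IsStrictOrderedRing R] [Fintype ι] [Fintype κ]

theorem impact_work_nonpos {u u' p e : R} (he : e ≤ 1) (hu : u ≤ 0) (hp : 0 ≤ p)
    (hcompl : (u' + e * u) * p = 0) : lineMap u u' (1 / 2 : R) * p ≤ 0 := by
  have hwork : lineMap u u' (1 / 2 : R) * p = 1 / 2 * ((1 - e) * p * u) := by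
    rw [AffineMap.lineMap_apply_ring]
    linear_combination 1 / 2 * hcompl
  rw [hwork]
  exact mul_nonpos_of_nonneg_of_nonpos (by norm_num)
    (mul_nonpos_of_nonneg_of_nonpos (mul_nonneg (sub_nonneg.2 he) hp) hu)

theorem contact_work_nonpos {U U' P e : κ → R} {I : Set κ} (he : ∀ α ∈ I, e α ≤ 1)
    (hPout : ∀ α ∉ I, P α = 0)
    (hc : ∀ α ∈ I, U α ≤ 0 ∧ 0 ≤ P α ∧ (U' α + e α * U α) * P α = 0) :
    lineMap U U' (1 / 2 : R) ⬝ᵥ P ≤ 0 := by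
  refine Finset.sum_nonpos fun α _ ↦ ?_
  by_cases hα : α ∈ I
  · obtain ⟨hU, hP, hcompl⟩ := hc α hα
    exact impact_work_nonpos (he α hα) hU hP hcompl
  · rw [hPout α hα, mul_zero]

variable [StarRing R] [TrivialStar R]

theorem nonsmooth_newmark_dissipates_general {h γ β : R} {M K C : Matrix ι ι R}
    {G : Matrix ι κ R} (hM : M.PosSemidef) (hK : K.PosSemidef)
    {q q' v v' a a' w F F' : ι → R} {P e : κ → R} {I : Set κ}
    (hF : M *ᵥ a + K *ᵥ q + C *ᵥ v = F) (hF' : M *ᵥ a' + K *ᵥ q' + C *ᵥ v' = F')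
    (hw : M *ᵥ w = G *ᵥ P) (step : IsNewmarkUpdate h γ β q q' v v' a a' w)
    (he : ∀ α ∈ I, e α ≤ 1) (hPout : ∀ α ∉ I, P α = 0)
    (hc : ∀ α ∈ I, (Gᵀ *ᵥ v) α ≤ 0 ∧ 0 ≤ P α ∧ ((Gᵀ *ᵥ v') α + e α * (Gᵀ *ᵥ v) α) * P α = 0)
    (hβ : γ ≤ 2 * β) (hγ : 1 / 2 ≤ γ) :
    algorithmicEnergy h γ β M K q' v' a' - algorithmicEnergy h γ β M K q v a
      - (q' - q) ⬝ᵥ lineMap F F' γ - -((q' - q) ⬝ᵥ C *ᵥ lineMap v v' γ) ≤ 0 := by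
  have impulse : lineMap v v' (1 / 2 : R) ⬝ᵥ M *ᵥ w ≤ 0 := by
    rw [hw, dotProduct_mulVec, ← mulVec_transpose, mulVec_lineMap]
    exact contact_work_nonpos he hPout hc
  have elastic : 0 ≤ (γ - 1 / 2) * ((q' - q) ⬝ᵥ K *ᵥ (q' - q)) :=
    mul_nonneg (sub_nonneg.2 hγ) (by simpa using hK.dotProduct_mulVec_nonneg (q' - q))
  have inertial :
      0 ≤ h ^ 2 / 2 * (2 * β - γ) * (γ - 1 / 2) * ((a' - a) ⬝ᵥ M *ᵥ (a' - a)) :=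
    mul_nonneg (mul_nonneg (mul_nonneg (by positivity) (sub_nonneg.2 hβ)) (sub_nonneg.2 hγ))
      (by simpa using hM.dotProduct_mulVec_nonneg (a' - a))
  rw [step.algorithmicEnergy_balance (isHermitian_iff_isSymm.1 hM.isHermitian)
    (isHermitian_iff_isSymm.1 hK.isHermitian) hF hF']
  linarith

end Dissipation

/-- The nonsmooth Newmark scheme dissipates the algorithmic energy when
`2β ≥ γ ≥ 1/2`, under the discrete contact conditions. -/
theorem nonsmooth_newmark_dissipates
    (n m : ℕ) (hn : 1 ≤ n) (hm : 1 ≤ m)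
    (h γ β : ℝ) (hh : 0 < h)
    (M K C : Matrix (Fin n) (Fin n) ℝ) (G : Matrix (Fin n) (Fin m) ℝ)
    (hM : M.PosDef) (hK : K.PosSemidef)
    (qk qk1 vk vk1 ak ak1 w Fk Fk1 : Fin n → ℝ) (P : Fin m → ℝ)
    (hbalk : M.mulVec ak + K.mulVec qk + C.mulVec vk = Fk)
    (hbalk1 : M.mulVec ak1 + K.mulVec qk1 + C.mulVec vk1 = Fk1)
    (hw : M.mulVec w = G.mulVec P)
    (hv : vk1 = vk + (h * (1 - γ)) • ak + (h * γ) • ak1 + w)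
    (hq : qk1 = qk + h • vk + (h ^ 2 * (1/2 - β)) • ak + (h ^ 2 * β) • ak1
        + (h / 2) • w)
    (e : Fin m → ℝ) (I₁ : Finset (Fin m))
    (he : ∀ α, 0 ≤ e α ∧ e α ≤ 1)
    (hPout : ∀ α ∉ I₁, P α = 0)
    (hc : ∀ α ∈ I₁, Gᵀ.mulVec vk α ≤ 0
        ∧ 0 ≤ Gᵀ.mulVec vk1 α + e α * Gᵀ.mulVec vk α
        ∧ 0 ≤ P α
        ∧ (Gᵀ.mulVec vk1 α + e α * Gᵀ.mulVec vk α) * P α = 0)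
    (hβ : γ ≤ 2 * β) (hγ : 1/2 ≤ γ) :
    (1/2 * (vk1 ⬝ᵥ M.mulVec vk1) + 1/2 * (qk1 ⬝ᵥ K.mulVec qk1)
        + h ^ 2 / 4 * (2 * β - γ) * (ak1 ⬝ᵥ M.mulVec ak1))
      - (1/2 * (vk ⬝ᵥ M.mulVec vk) + 1/2 * (qk ⬝ᵥ K.mulVec qk)
        + h ^ 2 / 4 * (2 * β - γ) * (ak ⬝ᵥ M.mulVec ak))
      - (qk1 - qk) ⬝ᵥ (γ • Fk1 + (1 - γ) • Fk)
      - (-((qk1 - qk) ⬝ᵥ C.mulVec (γ • vk1 + (1 - γ) • vk))) ≤ 0 := by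
  rw [add_comm (γ • Fk1), add_comm (γ • vk1), ← lineMap_apply_module, ← lineMap_apply_module]
  exact nonsmooth_newmark_dissipates_general (I := (I₁ : Set (Fin m))) hM.posSemidef hK hbalk hbalk1
    hw ⟨hv, hq⟩ (fun α _ ↦ (he α).2) hPout (fun α hα ↦ ⟨(hc α hα).1, (hc α hα).2.2⟩) hβ hγ
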